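/- Let L be an n×n real symmetric positive semidefinite matrix and let p be a real polynomial such that 0 ≤ p(λ) ≤ 1 for every eigenvalue λ of L (i.e. for every i, 0 ≤ p(hL.eigenvalues i) ≤ 1, where hL is the proof that L is Hermitian). Then for every x ∈ ℝⁿ, the Dirichlet energy does not increase under the filter p(L) = Polynomial.aeval L p: ⟨p(L) x, L (p(L) x)⟩ ≤ ⟨x, L x⟩, where ⟨·,·⟩ is the Euclidean inner product (dot product) on ℝⁿ. -/

import Mathlib

open Matrix

/-!
For a Hermitian matrix `L`, the filtered matrix `f(L)* L f(L)` is again a function of `L`, namely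
`t ↦ t * f t ^ 2`. The functional calculus is monotone, so this matrix lies below `L` in the Loewner
order as soon as `t * f t ^ 2 ≤ t` at every eigenvalue `t`; for `t ≥ 0` the bound `|f t| ≤ 1` is
enough. Comparing quadratic forms at `x` gives the decrease of the energy.
-/

section FunctionalCalculus

variable {R A : Type*} {P : A → Prop} [CommSemiring R] [PartialOrder R] [StarRing R]
  [MetricSpace R] [IsTopologicalSemiring R] [ContinuousStar R] [ContinuousSqrt R]
  [StarOrderedRing R] [TopologicalSpace A] [Ring A] [StarRing A] [PartialOrder A]
  [StarOrderedRing A] [Algebra R A] [ContinuousFunctionalCalculus R A P]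

lemma cfc_mul_mul_cfc_le_self {f : R → R} {a : A} (ha : P a)
    (hf : ContinuousOn f (spectrum R a)) (h : ∀ t ∈ spectrum R a, t * f t ^ 2 ≤ t) :
    cfc f a * a * cfc f a ≤ a :=
  calc
    cfc f a * a * cfc f a = cfc (fun t ↦ f t * t * f t) a := by
      rw [cfc_mul (fun t ↦ f t * t) f a, cfc_mul f (fun t ↦ t) a, cfc_id' R a]
    _ ≤ cfc (fun t ↦ t) a := cfc_mono fun t ht ↦ by
      rw [mul_comm (f t) t, mul_assoc, ← sq]
      exact h t ht
    _ = a := cfc_id' R a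

end FunctionalCalculus

section Energy

open scoped ComplexOrder MatrixOrder

lemma star_dotProduct_mulVec_mono {R n : Type*} [Fintype n] [Ring R] [PartialOrder R]
    [AddRightMono R] [StarRing R] {A B : Matrix n n R} (h : (B - A).PosSemidef) (x : n → R) :
    star x ⬝ᵥ (A *ᵥ x) ≤ star x ⬝ᵥ (B *ᵥ x) := by
  rw [← sub_nonneg, ← dotProduct_sub, ← sub_mulVec]
  exact h.dotProduct_mulVec_nonneg x

lemma star_mulVec_dotProduct_mulVec_mulVec {R m n : Type*} [Fintype m] [Fintype n]
    [NonUnitalSemiring R] [StarRing R] (M : Matrix m n R) (A : Matrix m m R) (x : n → R) :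
    star (M *ᵥ x) ⬝ᵥ (A *ᵥ (M *ᵥ x)) = star x ⬝ᵥ ((Mᴴ * A * M) *ᵥ x) := by
  simp only [star_mulVec, dotProduct_mulVec, vecMul_vecMul]

theorem dirichlet_energy_nonincreasing_general {𝕜 n : Type*} [RCLike 𝕜] [Fintype n]
    [DecidableEq n] {L : Matrix n n 𝕜} (hL : L.IsHermitian) {f : ℝ → ℝ}
    (hf : ∀ i, hL.eigenvalues i * f (hL.eigenvalues i) ^ 2 ≤ hL.eigenvalues i) (x : n → 𝕜) :
    star (cfc f L *ᵥ x) ⬝ᵥ (L *ᵥ (cfc f L *ᵥ x)) ≤ star x ⬝ᵥ (L *ᵥ x) := by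
  have hspec : ∀ t ∈ spectrum ℝ L, t * f t ^ 2 ≤ t := by
    rw [hL.spectrum_real_eq_range_eigenvalues]
    exact Set.forall_mem_range.2 hf
  have hstar : (cfc f L)ᴴ = cfc f L := (IsSelfAdjoint.cfc (f := f) (a := L)).star_eq
  have hle : cfc f L * L * cfc f L ≤ L :=
    cfc_mul_mul_cfc_le_self hL.isSelfAdjoint (L.finite_real_spectrum.continuousOn f) hspec
  rw [star_mulVec_dotProduct_mulVec_mulVec, hstar]
  exact star_dotProduct_mulVec_mono (Matrix.le_iff.1 hle) x

end Energy

/-- **Non-increasing Dirichlet energy.**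
If `L` is real symmetric PSD and `0 ≤ p(λ) ≤ 1` on all eigenvalues `λ` of `L`,
then the Dirichlet energy does not increase under the polynomial filter `p(L)`:
`⟨p(L) x, L (p(L) x)⟩ ≤ ⟨x, L x⟩`. -/
theorem dirichlet_energy_nonincreasing
    {n : ℕ} (L : Matrix (Fin n) (Fin n) ℝ) (hL : L.IsHermitian)
    (hPSD : L.PosSemidef) (p : Polynomial ℝ)
    (hp : ∀ i, 0 ≤ p.eval (hL.eigenvalues i) ∧ p.eval (hL.eigenvalues i) ≤ 1)
    (x : Fin n → ℝ) :
    ((Polynomial.aeval L p).mulVec x) ⬝ᵥ (L.mulVec ((Polynomial.aeval L p).mulVec x))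
      ≤ x ⬝ᵥ (L.mulVec x) := by
  rw [← cfc_polynomial p L hL.isSelfAdjoint]
  exact dirichlet_energy_nonincreasing_general hL (fun i ↦
    mul_le_of_le_one_right (hPSD.eigenvalues_nonneg i) (pow_le_one₀ (hp i).1 (hp i).2)) x
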